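/- arXiv:2108.08531 — 2 statements merged into one kernel-verified Lean document; each statement's English description precedes it below -/
import Mathlib

section
/- There exist three elements x, y, z in PSL(2,7) with o(x) = o(y) = 4, o(z) = 7, x·y·z = 1, and ⟨x, y, z⟩ = PSL(2,7). (Explicitly: x = (1,7,6,3)(2,8,5,4), y = (1,2,5,7)(3,8,6,4), z = (2,3,5,4,7,8,6).) -/
open Matrix

/-!
A matrix `A` of determinant one satisfies `A ^ 2 + 1 = tr A • A`. If `(tr A) ^ 2 = 2`, then `A ^ 2`
has trace zero, so `A ^ 4 = -1`, while `A ^ 2` is not scalar because scalars have trace `±2 ≠ 0`: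
the image of `A` in `PSL₂` has order exactly four.

When `p` is odd and `t ^ 2 = 2` in `𝔽_p`, let `x` be the companion matrix of `X ^ 2 - t X + 1` and
`z` the upper transvection with entry `-2t`. Then `tr x = t` and `tr (z x) = -t`, so `x` and
`y = (z x)⁻¹` both have projective order four, `z` has order `p`, and `x y z = 1`. Powers of `z`
give all the upper transvections; with `x` these yield the rotation `[0, -1; 1, 0]`, hence the
lower transvections, and transvections generate `SL₂(𝔽_p)`. A square root of `2` modulo `7` is `3`.
-/

section SpecialLinearPSL

open Matrix.SpecialLinearGroup
open scoped MatrixGroups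

section Trace

variable {R : Type*} [CommRing R]

lemma sq_add_one_eq_trace_smul (A : SL(2, R)) : A.1 ^ 2 + 1 = A.1.trace • A.1 := by
  nontriviality R
  have cayley_hamilton := aeval_self_charpoly A.1
  rw [charpoly_fin_two, A.det_coe, map_one, map_add, map_sub, map_mul, map_pow, map_one,
    Polynomial.aeval_X, Polynomial.aeval_C, ← Algebra.smul_def] at cayley_hamilton
  rwa [sub_add_eq_add_sub, sub_eq_zero] at cayley_hamilton

lemma trace_sq_eq_sub_two (A : SL(2, R)) :
    (A ^ 2 : SL(2, R)).1.trace = A.1.trace ^ 2 - 2 := by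
  have h := congrArg trace (sq_add_one_eq_trace_smul A)
  rw [trace_add, trace_one, trace_smul, smul_eq_mul, Fintype.card_fin] at h
  rw [coe_pow]
  linear_combination h

lemma sq_eq_neg_one_of_trace_eq_zero {A : SL(2, R)} (hA : A.1.trace = 0) : A ^ 2 = -1 := by
  apply Subtype.ext
  rw [coe_pow, coe_neg, coe_one, eq_neg_iff_add_eq_zero, sq_add_one_eq_trace_smul, hA, zero_smul]

lemma trace_ne_zero_of_mem_center (h2 : (2 : R) ≠ 0) {A : SL(2, R)}
    (hA : A ∈ Subgroup.center SL(2, R)) : A.1.trace ≠ 0 := by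
  obtain ⟨r, hr, hrA⟩ := mem_center_iff.1 hA
  rw [Fintype.card_fin] at hr
  intro htr
  rw [← hrA, trace_fin_two] at htr
  simp only [scalar_apply, diagonal_apply_eq] at htr
  exact h2 (by linear_combination r * htr - 2 * hr)

lemma neg_one_mem_center : (-1 : SL(2, R)) ∈ Subgroup.center SL(2, R) :=
  Subgroup.mem_center_iff.2 fun _ ↦ by rw [mul_neg_one, neg_one_mul]

lemma orderOf_mk_eq_four_of_trace_sq_eq_two (h2 : (2 : R) ≠ 0) {A : SL(2, R)}
    (hA : A.1.trace ^ 2 = 2) : orderOf (A : PSL(2, R)) = 4 := by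
  have htr : (A ^ 2 : SL(2, R)).1.trace = 0 := by
    rw [trace_sq_eq_sub_two, hA, sub_self]
  refine orderOf_eq_prime_pow (p := 2) (n := 1) (fun hsq ↦ ?_) ?_
  · rw [pow_one, ← QuotientGroup.mk_pow, QuotientGroup.eq_one_iff] at hsq
    exact trace_ne_zero_of_mem_center h2 hsq htr
  · have hpow : A ^ 2 ^ (1 + 1) = -1 := by
      rw [pow_succ, pow_one, pow_mul, sq_eq_neg_one_of_trace_eq_zero htr]
    rw [← QuotientGroup.mk_pow, QuotientGroup.eq_one_iff, hpow]
    exact neg_one_mem_center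

end Trace

section Transvection

variable {ι R : Type*} [DecidableEq ι] [Fintype ι] [CommRing R] {i j : ι}

lemma transvection_nsmul (hij : i ≠ j) (n : ℕ) (b : R) :
    transvection hij (n • b) = transvection hij b ^ n := by
  induction n with
  | zero => rw [zero_smul, transvection_coeff_zero, pow_zero]
  | succ n ih => rw [succ_nsmul, transvection_add, ih, pow_succ]

lemma orderOf_mk_transvection (p : ℕ) [Fact p.Prime] [CharP R p] (hij : i ≠ j) {b : R}
    (hb : b ≠ 0) : orderOf (transvection hij b : ProjectiveSpecialLinearGroup ι R) = p := by
  refine orderOf_eq_prime ?_ fun h ↦ ?_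
  · rw [← QuotientGroup.mk_pow, ← transvection_nsmul, nsmul_eq_mul, CharP.cast_eq_zero, zero_mul,
      transvection_coeff_zero, QuotientGroup.mk_one]
  · exact hb ((transvection_mem_center_iff hij b).1 ((QuotientGroup.eq_one_iff _).1 h))

lemma transvection_mem_of_ne_zero {p : ℕ} [Fact p.Prime] (hij : i ≠ j) {a : ZMod p} (ha : a ≠ 0)
    {H : Subgroup (SpecialLinearGroup ι (ZMod p))} (haH : transvection hij a ∈ H) (b : ZMod p) :
    transvection hij b ∈ H := by
  have hb : b = (b / a).val • a := by
    rw [nsmul_eq_mul, ZMod.natCast_zmod_val, div_mul_cancel₀ b ha]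
  rw [hb, transvection_nsmul]
  exact H.pow_mem haH _

end Transvection

section Companion

/-- The companion matrix of `X ^ 2 - t * X + 1`, as an element of `SL₂` with trace `t`; its value
at `t = 0` is the rotation `S` of the modular group. -/
def sl2Companion {R : Type*} [CommRing R] (t : R) : SL(2, R) :=
  ⟨!![0, -1; 1, t], by simp [det_fin_two]⟩

section CommRing

variable {R : Type*} [CommRing R]

lemma coe_sl2Companion (t : R) : (sl2Companion t).1 = !![0, -1; 1, t] := rfl

lemma trace_sl2Companion (t : R) : (sl2Companion t).1.trace = t := by
  simp [coe_sl2Companion, trace_fin_two]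

lemma trace_transvection_mul_sl2Companion (a t : R) :
    (transvection zero_ne_one a * sl2Companion t).1.trace = a + t := by
  simp [coe_sl2Companion, transvection_coe, trace_fin_two, mul_apply]

lemma sl2Companion_mul_transvection (t b : R) :
    sl2Companion t * transvection zero_ne_one b = sl2Companion (t + b) := by
  ext i j
  fin_cases i <;> fin_cases j <;>
    simp [coe_sl2Companion, transvection_coe, mul_apply, add_comm]

lemma sl2Companion_zero_conj_transvection (b : R) :
    sl2Companion 0 * transvection zero_ne_one (-b) * (sl2Companion 0)⁻¹ =
      transvection one_ne_zero b := by
  rw [mul_inv_eq_iff_eq_mul]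
  ext i j
  fin_cases i <;> fin_cases j <;>
    simp [coe_sl2Companion, transvection_coe, mul_apply]

end CommRing

lemma eq_top_of_sl2Companion_mem_of_transvection_mem {F : Type*} [Field F]
    {H : Subgroup SL(2, F)} {t : F} (ht : sl2Companion t ∈ H)
    (hupper : ∀ b : F, transvection zero_ne_one b ∈ H) : H = ⊤ := by
  have hrot : sl2Companion (0 : F) ∈ H := by
    rw [← add_neg_cancel t, ← sl2Companion_mul_transvection]
    exact H.mul_mem ht (hupper _)
  have hlower (b : F) : transvection one_ne_zero b ∈ H := by
    rw [← sl2Companion_zero_conj_transvection]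
    exact H.mul_mem (H.mul_mem hrot (hupper _)) (H.inv_mem hrot)
  refine (Subgroup.eq_top_iff' H).2 <|
    SL2.transvection_induction _ (fun i j hij c ↦ ?_) fun _ _ ↦ H.mul_mem
  fin_cases i <;> fin_cases j
  exacts [absurd rfl hij, hupper c, hlower c, absurd rfl hij]

lemma closure_sl2Companion_transvection {p : ℕ} [Fact p.Prime] (t : ZMod p) {a : ZMod p}
    (ha : a ≠ 0) :
    Subgroup.closure {sl2Companion t, SpecialLinearGroup.transvection zero_ne_one a} = ⊤ :=
  eq_top_of_sl2Companion_mem_of_transvection_mem (Subgroup.subset_closure (Set.mem_insert _ _)) <|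
    transvection_mem_of_ne_zero zero_ne_one ha <| Subgroup.subset_closure <|
      Set.mem_insert_of_mem _ rfl

end Companion

theorem stmt11_general (p : ℕ) [Fact p.Prime] (hp : p ≠ 2) (hsq : IsSquare (2 : ZMod p)) :
    ∃ x y z : PSL(2, ZMod p),
      orderOf x = 4 ∧ orderOf y = 4 ∧ orderOf z = p ∧ x * y * z = 1 ∧
        Subgroup.closure {x, y, z} = ⊤ := by
  have h2 : (2 : ZMod p) ≠ 0 := Ring.two_ne_zero (by rwa [ZMod.ringChar_zmod_n])
  obtain ⟨t, ht⟩ := (isSquare_iff_exists_sq _).1 hsq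
  have ht0 : t ≠ 0 := by
    rintro rfl
    exact h2 (by rw [ht, zero_pow two_ne_zero])
  have ha : -(2 * t) ≠ 0 := neg_ne_zero.2 (mul_ne_zero h2 ht0)
  let X := sl2Companion t
  let Z : SL(2, ZMod p) := transvection zero_ne_one (-(2 * t))
  have hX : X.1.trace ^ 2 = 2 := by rw [trace_sl2Companion, ht]
  have hZX : (Z * X).1.trace ^ 2 = 2 := by
    rw [trace_transvection_mul_sl2Companion]
    linear_combination -ht
  refine ⟨X, (Z * X : SL(2, ZMod p))⁻¹, Z, orderOf_mk_eq_four_of_trace_sq_eq_two h2 hX, ?_,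
    orderOf_mk_transvection p zero_ne_one ha, ?_, ?_⟩
  · rw [orderOf_inv, orderOf_mk_eq_four_of_trace_sq_eq_two h2 hZX]
  · rw [QuotientGroup.mk_mul]
    group
  · rw [eq_top_iff, ← Subgroup.map_top_of_surjective _ (QuotientGroup.mk'_surjective _),
      ← closure_sl2Companion_transvection t ha, MonoidHom.map_closure, Set.image_pair]
    exact Subgroup.closure_mono (Set.insert_subset_insert (Set.subset_insert _ _))

end SpecialLinearPSL

theorem stmt11 : ∃ x y z : ProjectiveSpecialLinearGroup (Fin 2) (ZMod 7),
    orderOf x = 4 ∧ orderOf y = 4 ∧ orderOf z = 7 ∧ x * y * z = 1 ∧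
      Subgroup.closure
        ({x, y, z} : Set (ProjectiveSpecialLinearGroup (Fin 2) (ZMod 7))) = ⊤ := by
  have : Fact (Nat.Prime 7) := ⟨by norm_num⟩
  exact stmt11_general 7 (by norm_num) ⟨3, rfl⟩
end

section
/- There exist three elements a, b, c in PSL(3,4) of orders 5, 5, 7 respectively with a·b·c = 1 and ⟨a, b, c⟩ = PSL(3,4). (Explicitly, realized as permutations of the 21 points of the projective plane over F₄: a = (1,21,18,19,20)(2,9,12,6,5)(3,17,15,4,13)(7,14,10,16,8), b = (2,13,15,8,18)(3,12,16,7,19)(4,11,14,9,20)(5,10,17,6,21), c = (1,20,2,21,12,13,5)(3,18,16,9,7,10,6)(4,19,8,17,14,11,15).) -/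
open Matrix

/-
In characteristic 2, if w² = w + 1 then the matrices a, b below satisfy a⁵ = b⁵ = (ab)⁷ = 1,
and a²b and b²a differ by a transvection both on the left and on the right:
  a²b = t₀₁(w) · b²a = b²a · t₂₀(1).
Hence ⟨a, b⟩ contains t₀₁(w) and t₂₀(1), and t₁₂(w) = a t₀₁(w) a⁻¹. By the commutator relation
[tᵢⱼ(s), tⱼₖ(t)] = tᵢₖ(st), going around the triangle 0 → 1 → 2 → 0 multiplies the coefficients
of the transvections of ⟨a, b⟩ by w · w · 1 = w², which generates 𝔽₄ as a ring; so ⟨a, b⟩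
contains every transvection and equals SL₃(𝔽₄). None of a, b, ab is scalar, so their orders
survive in the quotient.
-/

section Transvection

open scoped commutatorElement

variable {ι R F : Type*} [Fintype ι] [DecidableEq ι] [CommRing R] [Field F]

theorem commutatorElement_transvection {i j k : ι} (hij : i ≠ j) (hjk : j ≠ k) (hik : i ≠ k)
    (s t : R) :
    ⁅SpecialLinearGroup.transvection hij s, SpecialLinearGroup.transvection hjk t⁆ =
      SpecialLinearGroup.transvection hik (s * t) := by
  rw [commutatorElement_def, mul_inv_eq_iff_eq_mul, mul_inv_eq_iff_eq_mul]
  apply Subtype.ext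
  simp only [Matrix.SpecialLinearGroup.coe_mul, Matrix.SpecialLinearGroup.transvection_coe, mul_add,
    mul_one, add_mul, one_mul, single_mul_single_same, ne_eq, hjk.symm, hik.symm, not_false_eq_true,
    single_mul_single_of_ne, add_zero]
  abel

theorem coe_diag2n_eq_one_add_single {i j : ι} (hij : i ≠ j) {c : F} (hc : c ≠ 0) :
    (SpecialLinearGroup.diag2n hij c hc : Matrix ι ι F) =
      1 + single i i (c - 1) + single j j (c⁻¹ - 1) := by
  ext x y
  obtain rfl | hxy := eq_or_ne x y
  · simp only [Matrix.SpecialLinearGroup.diag2n_coe, diagonal_apply_eq, single_apply,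
      Matrix.add_apply, one_apply_eq, and_self]
    grind
  · simp_all [Matrix.SpecialLinearGroup.diag2n_coe]

-- Steinberg's h(c) = w(c) w(-1), where w(c) = tᵢⱼ(c) tⱼᵢ(-c⁻¹) tᵢⱼ(c).
theorem diag2n_eq_mul_transvection {i j : ι} (hij : i ≠ j) {c : F} (hc : c ≠ 0) :
    SpecialLinearGroup.diag2n hij c hc =
      SpecialLinearGroup.transvection hij c * SpecialLinearGroup.transvection hij.symm (-c⁻¹) *
        SpecialLinearGroup.transvection hij c *
      (SpecialLinearGroup.transvection hij (-1) * SpecialLinearGroup.transvection hij.symm 1 *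
        SpecialLinearGroup.transvection hij (-1)) := by
  apply Subtype.ext
  simp only [coe_diag2n_eq_one_add_single, Matrix.SpecialLinearGroup.coe_mul,
    Matrix.SpecialLinearGroup.transvection_coe, sub_eq_add_neg, single_add, ← Matrix.single_neg,
    mul_add, add_mul, mul_one, one_mul, mul_neg, neg_mul, single_mul_single_same, ne_eq,
    hij, hij.symm, hc, not_false_eq_true, single_mul_single_of_ne, mul_inv_cancel₀,
    inv_mul_cancel₀, add_zero, neg_zero]
  abel

theorem eq_top_of_forall_transvection_mem {K : Subgroup (SpecialLinearGroup ι F)}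
    (hK : ∀ (i j : ι) (hij : i ≠ j) (c : F), SpecialLinearGroup.transvection hij c ∈ K) :
    K = ⊤ := by
  cases subsingleton_or_nontrivial ι with
  | inl _ => exact Subsingleton.elim _ _
  | inr _ =>
    refine (Subgroup.eq_top_iff' K).2 fun A ↦ ?_
    induction A using SpecialLinearGroup.diagonal_transvection_induction' with
    | hdiag i j hij hc =>
      rw [diag2n_eq_mul_transvection]
      exact mul_mem (mul_mem (mul_mem (hK ..) (hK ..)) (hK ..))
        (mul_mem (mul_mem (hK ..) (hK ..)) (hK ..))
    | htransvec i j hij c => exact hK i j hij c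
    | hmul A B hA hB => exact mul_mem hA hB

/-- The entry at `(i, j)` of the net (or carpet) of `K`: the elements `c` for which `K` contains
the elementary matrix `1 + c Eᵢⱼ`. -/
def transvectionCoeffs (K : Subgroup (SpecialLinearGroup ι R)) {i j : ι} (hij : i ≠ j) :
    AddSubgroup R where
  carrier := {c | SpecialLinearGroup.transvection hij c ∈ K}
  zero_mem' := by simp [one_mem]
  add_mem' hs ht := by
    simpa only [Set.mem_ofPred_eq, Matrix.SpecialLinearGroup.transvection_add] using K.mul_mem hs ht
  neg_mem' hs := by
    simpa only [Set.mem_ofPred_eq, Matrix.SpecialLinearGroup.transvection_inv] using K.inv_mem hs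

variable {K : Subgroup (SpecialLinearGroup ι R)} {i j k : ι}

theorem mem_transvectionCoeffs {hij : i ≠ j} {c : R} :
    c ∈ transvectionCoeffs K hij ↔ SpecialLinearGroup.transvection hij c ∈ K :=
  Iff.rfl

theorem mul_mem_transvectionCoeffs {hij : i ≠ j} {hjk : j ≠ k} (hik : i ≠ k) {s t : R}
    (hs : s ∈ transvectionCoeffs K hij) (ht : t ∈ transvectionCoeffs K hjk) :
    s * t ∈ transvectionCoeffs K hik := by
  rw [mem_transvectionCoeffs, ← commutatorElement_transvection hij hjk hik]
  exact K.mul_mem (K.mul_mem (K.mul_mem hs ht) (K.inv_mem hs)) (K.inv_mem ht)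

variable {hij : i ≠ j} {hjk : j ≠ k} {hki : k ≠ i} {α β γ : R}

theorem mul_cycle_mem_transvectionCoeffs (hα : α ∈ transvectionCoeffs K hij)
    (hβ : β ∈ transvectionCoeffs K hjk) (hγ : γ ∈ transvectionCoeffs K hki) {x : R}
    (hx : x ∈ transvectionCoeffs K hij) : x * (α * β * γ) ∈ transvectionCoeffs K hij := by
  have hβx : x * β ∈ transvectionCoeffs K hki.symm := mul_mem_transvectionCoeffs _ hx hβ
  have hγα : γ * α ∈ transvectionCoeffs K hjk.symm := mul_mem_transvectionCoeffs _ hγ hα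
  convert mul_mem_transvectionCoeffs hij hβx hγα using 1
  ring

theorem transvectionCoeffs_eq_top_of_cycle (hα : α ∈ transvectionCoeffs K hij)
    (hβ : β ∈ transvectionCoeffs K hjk) (hγ : γ ∈ transvectionCoeffs K hki) (hunit : IsUnit α)
    (hgen : Subring.closure {α * β * γ} = ⊤) : transvectionCoeffs K hij = ⊤ := by
  have hmul (r : R) : ∀ x ∈ transvectionCoeffs K hij, x * r ∈ transvectionCoeffs K hij := by
    have hr : r ∈ Subring.closure {α * β * γ} := hgen ▸ Subring.mem_top r
    induction hr using Subring.closure_induction with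
    | mem r hr =>
      rw [Set.mem_singleton_iff.1 hr]
      exact fun x ↦ mul_cycle_mem_transvectionCoeffs hα hβ hγ
    | zero => simp [zero_mem]
    | one => simp
    | add r s _ _ hr hs =>
      intro x hx
      rw [mul_add]
      exact add_mem (hr x hx) (hs x hx)
    | neg r _ hr =>
      intro x hx
      rw [mul_neg]
      exact neg_mem (hr x hx)
    | mul r s _ _ hr hs =>
      intro x hx
      rw [← mul_assoc]
      exact hs _ (hr x hx)
  obtain ⟨u, rfl⟩ := hunit
  refine (AddSubgroup.eq_top_iff' _).2 fun y ↦ ?_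
  simpa using hmul (↑u⁻¹ * y) _ hα

theorem transvectionCoeffs_eq_top_trans (hik : i ≠ k) (hi : transvectionCoeffs K hij = ⊤)
    (hj : transvectionCoeffs K hjk = ⊤) : transvectionCoeffs K hik = ⊤ := by
  refine (AddSubgroup.eq_top_iff' _).2 fun y ↦ ?_
  simpa using mul_mem_transvectionCoeffs hik (s := y) (t := 1) (hi ▸ AddSubgroup.mem_top _)
    (hj ▸ AddSubgroup.mem_top _)

theorem eq_top_of_transvection_cycle_mem {K : Subgroup (SpecialLinearGroup (Fin 3) F)}
    {h₀₁ : (0 : Fin 3) ≠ 1} {h₁₂ : (1 : Fin 3) ≠ 2} {h₂₀ : (2 : Fin 3) ≠ 0} {α β γ : F}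
    (hα : SpecialLinearGroup.transvection h₀₁ α ∈ K)
    (hβ : SpecialLinearGroup.transvection h₁₂ β ∈ K)
    (hγ : SpecialLinearGroup.transvection h₂₀ γ ∈ K) (hne : α * β * γ ≠ 0)
    (hgen : Subring.closure {α * β * γ} = ⊤) : K = ⊤ := by
  obtain ⟨⟨hα0, hβ0⟩, hγ0⟩ : (α ≠ 0 ∧ β ≠ 0) ∧ γ ≠ 0 := by simpa only [mul_ne_zero_iff] using hne
  have h01 : transvectionCoeffs K h₀₁ = ⊤ :=
    transvectionCoeffs_eq_top_of_cycle hα hβ hγ hα0.isUnit hgen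
  have h12 : transvectionCoeffs K h₁₂ = ⊤ :=
    transvectionCoeffs_eq_top_of_cycle hβ hγ hα hβ0.isUnit (by rwa [mul_rotate] at hgen)
  have h20 : transvectionCoeffs K h₂₀ = ⊤ :=
    transvectionCoeffs_eq_top_of_cycle hγ hα hβ hγ0.isUnit (by rwa [← mul_rotate] at hgen)
  have h02 := transvectionCoeffs_eq_top_trans h₂₀.symm h01 h12
  have h10 := transvectionCoeffs_eq_top_trans h₀₁.symm h12 h20
  have h21 := transvectionCoeffs_eq_top_trans h₁₂.symm h20 h01
  refine eq_top_of_forall_transvection_mem fun i j hij c ↦ ?_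
  suffices transvectionCoeffs K hij = ⊤ from
    mem_transvectionCoeffs.1 (this ▸ AddSubgroup.mem_top c)
  fin_cases i <;> fin_cases j <;> first | exact absurd rfl hij | assumption

end Transvection

section FourElements

variable {F : Type*} [Field F]

theorem charP_two_of_card_eq_four (hF : Nat.card F = 4) : CharP F 2 := by
  have := Nat.finite_of_card_ne_zero (hF ▸ four_ne_zero)
  have := Fintype.ofFinite F
  exact charP_of_card_eq_prime_pow (f := 2) (by rw [← Nat.card_eq_fintype_card, hF]; norm_num)

theorem exists_sq_eq_add_one_of_card_eq_four (hF : Nat.card F = 4) : ∃ w : F, w ^ 2 = w + 1 := by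
  have := charP_two_of_card_eq_four hF
  have := Nat.finite_of_card_ne_zero (hF ▸ four_ne_zero)
  have := Fintype.ofFinite F
  have h3 : 3 ≤ ENat.card F := by rw [ENat.card_eq_coe_natCard, hF]; norm_num
  obtain ⟨w, h0, h1⟩ := ENat.exists_ne_ne_of_three_le h3 0 1
  have h4 : w ^ 4 = w := by rw [← hF, Nat.card_eq_fintype_card, FiniteField.pow_card]
  have hfactor : w * (w - 1) * (w ^ 2 - (w + 1)) = 0 := by grind
  exact ⟨w, by simpa [h0, h1, sub_eq_zero] using hfactor⟩

theorem subringClosure_singleton_eq_top_of_card_eq_four (hF : Nat.card F = 4) {x : F}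
    (h0 : x ≠ 0) (h1 : x ≠ 1) : Subring.closure {x} = ⊤ := by
  have := Nat.finite_of_card_ne_zero (hF ▸ four_ne_zero)
  set S := Subring.closure {x}
  have hlt : 2 < Nat.card S := by
    have := Fintype.ofFinite S
    rw [Nat.card_eq_fintype_card, Fintype.two_lt_card_iff]
    exact ⟨0, 1, ⟨x, Subring.subset_closure rfl⟩, zero_ne_one,
      by simpa [Subtype.ext_iff] using h0.symm,
      by simpa [Subtype.ext_iff] using h1.symm⟩
  have hdvd : Nat.card S ∣ 4 := hF ▸ S.toAddSubgroup.card_addSubgroup_dvd_card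
  have hcard : Nat.card S = Nat.card F := by
    have hle := Nat.le_of_dvd four_pos hdvd
    interval_cases Nat.card S <;> omega
  exact Subring.toAddSubgroup_eq_top.1 (AddSubgroup.eq_top_of_card_eq S.toAddSubgroup hcard)

end FourElements

section Generators

variable {R : Type*} [CommRing R]

/-- The generator `a`: an element of order 5 in `SL₃` over `𝔽₄` when `w ^ 2 = w + 1`. -/
def genA (w : R) : SpecialLinearGroup (Fin 3) R :=
  ⟨!![0, 0, 1; 1, w, w; 0, 1, 0], by simp [det_fin_three]⟩

theorem coe_genA (w : R) : (genA w : Matrix (Fin 3) (Fin 3) R) = !![0, 0, 1; 1, w, w; 0, 1, 0] :=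
  rfl

theorem coe_transvection_zero_one (h₀₁ : (0 : Fin 3) ≠ 1) (s : R) :
    (SpecialLinearGroup.transvection h₀₁ s : Matrix (Fin 3) (Fin 3) R) =
      !![1, s, 0; 0, 1, 0; 0, 0, 1] := by
  ext i j
  fin_cases i <;> fin_cases j <;> simp [Matrix.SpecialLinearGroup.transvection_coe]

theorem coe_transvection_one_two (h₁₂ : (1 : Fin 3) ≠ 2) (s : R) :
    (SpecialLinearGroup.transvection h₁₂ s : Matrix (Fin 3) (Fin 3) R) =
      !![1, 0, 0; 0, 1, s; 0, 0, 1] := by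
  ext i j
  fin_cases i <;> fin_cases j <;> simp [Matrix.SpecialLinearGroup.transvection_coe]

theorem coe_transvection_two_zero (h₂₀ : (2 : Fin 3) ≠ 0) (s : R) :
    (SpecialLinearGroup.transvection h₂₀ s : Matrix (Fin 3) (Fin 3) R) =
      !![1, 0, 0; 0, 1, 0; s, 0, 1] := by
  ext i j
  fin_cases i <;> fin_cases j <;> simp [Matrix.SpecialLinearGroup.transvection_coe]

theorem genA_mul_transvection (h₀₁ : (0 : Fin 3) ≠ 1) (h₁₂ : (1 : Fin 3) ≠ 2) (w s : R) :
    genA w * SpecialLinearGroup.transvection h₀₁ s =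
      SpecialLinearGroup.transvection h₁₂ s * genA w := by
  apply Subtype.ext
  simp only [Matrix.SpecialLinearGroup.coe_mul, coe_genA, coe_transvection_zero_one,
    coe_transvection_one_two, mul_fin_three, EmbeddingLike.apply_eq_iff_eq, vecCons_inj, and_true]
  grind

variable [CharP R 2] {w : R}

/-- The generator `b`: an element of order 5 in `SL₃` over `𝔽₄`, chosen together with `genA` so that
`ab` has order 7 and `a²b`, `b²a` differ by a transvection both on the left and on the right. -/
def genB (hw : w ^ 2 = w + 1) : SpecialLinearGroup (Fin 3) R :=
  ⟨!![0, w, 1; w, 1, 1; w + 1, 1, w], by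
    simp only [det_fin_three, of_apply, cons_val', cons_val_zero, cons_val_fin_one, cons_val_one,
      cons_val]
    grind⟩

theorem coe_genB (hw : w ^ 2 = w + 1) :
    (genB hw : Matrix (Fin 3) (Fin 3) R) = !![0, w, 1; w, 1, 1; w + 1, 1, w] :=
  rfl

theorem coe_genA_mul_genB (hw : w ^ 2 = w + 1) :
    (genA w * genB hw : Matrix (Fin 3) (Fin 3) R) = !![w + 1, 1, w; w, w, 0; w, 1, 1] := by
  simp only [coe_genA, coe_genB, mul_fin_three, EmbeddingLike.apply_eq_iff_eq, vecCons_inj,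
    and_true]
  grind

theorem genA_pow_five (hw : w ^ 2 = w + 1) : genA w ^ 5 = 1 := by
  apply Subtype.ext
  simp only [pow_succ, pow_zero, one_mul, Matrix.SpecialLinearGroup.coe_mul,
    Matrix.SpecialLinearGroup.coe_one, coe_genA, mul_fin_three, one_fin_three,
    EmbeddingLike.apply_eq_iff_eq, vecCons_inj, and_true]
  grind

theorem genB_pow_five (hw : w ^ 2 = w + 1) : genB hw ^ 5 = 1 := by
  apply Subtype.ext
  simp only [pow_succ, pow_zero, one_mul, Matrix.SpecialLinearGroup.coe_mul,
    Matrix.SpecialLinearGroup.coe_one, coe_genB, mul_fin_three, one_fin_three,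
    EmbeddingLike.apply_eq_iff_eq, vecCons_inj, and_true]
  grind

theorem genA_mul_genB_pow_seven (hw : w ^ 2 = w + 1) : (genA w * genB hw) ^ 7 = 1 := by
  apply Subtype.ext
  rw [Matrix.SpecialLinearGroup.coe_pow, Matrix.SpecialLinearGroup.coe_mul, coe_genA_mul_genB]
  simp only [pow_succ, pow_zero, one_mul, Matrix.SpecialLinearGroup.coe_one, mul_fin_three,
    one_fin_three, EmbeddingLike.apply_eq_iff_eq, vecCons_inj, and_true]
  grind

theorem genA_sq_mul_genB_eq_transvection_mul (h₀₁ : (0 : Fin 3) ≠ 1) (hw : w ^ 2 = w + 1) :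
    genA w ^ 2 * genB hw = SpecialLinearGroup.transvection h₀₁ w * (genB hw ^ 2 * genA w) := by
  apply Subtype.ext
  simp only [pow_two, Matrix.SpecialLinearGroup.coe_mul, coe_genA, coe_genB,
    coe_transvection_zero_one, mul_fin_three, EmbeddingLike.apply_eq_iff_eq, vecCons_inj, and_true]
  grind

theorem genA_sq_mul_genB_eq_mul_transvection (h₂₀ : (2 : Fin 3) ≠ 0) (hw : w ^ 2 = w + 1) :
    genA w ^ 2 * genB hw = genB hw ^ 2 * genA w * SpecialLinearGroup.transvection h₂₀ 1 := by
  apply Subtype.ext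
  simp only [pow_two, Matrix.SpecialLinearGroup.coe_mul, coe_genA, coe_genB,
    coe_transvection_two_zero, mul_fin_three, EmbeddingLike.apply_eq_iff_eq, vecCons_inj, and_true]
  grind

variable {F : Type*} [Field F]

theorem closure_genA_genB_eq_top [CharP F 2] (hF : Nat.card F = 4) {w : F}
    (hw : w ^ 2 = w + 1) : Subgroup.closure {genA w, genB hw} = ⊤ := by
  set K := Subgroup.closure {genA w, genB hw}
  have hA : genA w ∈ K := Subgroup.subset_closure (by simp)
  have hB : genB hw ∈ K := Subgroup.subset_closure (by simp)
  have hAAB : genA w ^ 2 * genB hw ∈ K := mul_mem (pow_mem hA 2) hB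
  have hBBA : genB hw ^ 2 * genA w ∈ K := mul_mem (pow_mem hB 2) hA
  have h₀₁ : (0 : Fin 3) ≠ 1 := by decide
  have h₁₂ : (1 : Fin 3) ≠ 2 := by decide
  have h₂₀ : (2 : Fin 3) ≠ 0 := by decide
  have ht₀₁ : SpecialLinearGroup.transvection h₀₁ w ∈ K := by
    rwa [genA_sq_mul_genB_eq_transvection_mul h₀₁, K.mul_mem_cancel_right hBBA] at hAAB
  have ht₁₂ : SpecialLinearGroup.transvection h₁₂ w ∈ K := by
    rw [← K.mul_mem_cancel_right hA, ← genA_mul_transvection h₀₁]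
    exact mul_mem hA ht₀₁
  have ht₂₀ : SpecialLinearGroup.transvection h₂₀ 1 ∈ K := by
    rwa [genA_sq_mul_genB_eq_mul_transvection h₂₀, K.mul_mem_cancel_left hBBA] at hAAB
  have hne0 : w * w * 1 ≠ 0 := by grind
  have hne1 : w * w * 1 ≠ 1 := by grind
  exact eq_top_of_transvection_cycle_mem ht₀₁ ht₁₂ ht₂₀ hne0
    (subringClosure_singleton_eq_top_of_card_eq_four hF hne0 hne1)

end Generators

section Quotient

theorem orderOf_quotient_mk_eq_prime {G : Type*} [Group G] {N : Subgroup G} [N.Normal] {p : ℕ}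
    [Fact p.Prime] {g : G} (hpow : g ^ p = 1) (hg : g ∉ N) : orderOf (g : G ⧸ N) = p :=
  orderOf_eq_prime (by rw [← QuotientGroup.mk_pow, hpow, QuotientGroup.mk_one])
    (by rwa [ne_eq, QuotientGroup.eq_one_iff])

theorem notMem_center_of_apply_ne_zero {ι R : Type*} [Fintype ι] [DecidableEq ι] [CommRing R]
    {A : SpecialLinearGroup ι R} {i j : ι} (hij : i ≠ j) (hA : A i j ≠ 0) :
    A ∉ Subgroup.center (SpecialLinearGroup ι R) := by
  rw [Matrix.SpecialLinearGroup.mem_center_iff]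
  rintro ⟨r, -, hr⟩
  exact hA (by rw [← hr, scalar_apply, diagonal_apply_ne _ hij])

end Quotient

theorem stmt13_general {F : Type*} [Field F] (hF : Nat.card F = 4) :
    ∃ a b c : ProjectiveSpecialLinearGroup (Fin 3) F,
      orderOf a = 5 ∧ orderOf b = 5 ∧ orderOf c = 7 ∧ a * b * c = 1 ∧
      Subgroup.closure ({a, b, c} : Set (ProjectiveSpecialLinearGroup (Fin 3) F)) = ⊤ := by
  have := charP_two_of_card_eq_four hF
  obtain ⟨w, hw⟩ := exists_sq_eq_add_one_of_card_eq_four hF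
  have : Fact (Nat.Prime 5) := ⟨by norm_num⟩
  have : Fact (Nat.Prime 7) := ⟨by norm_num⟩
  let π := QuotientGroup.mk' (Subgroup.center (SpecialLinearGroup (Fin 3) F))
  have hgen : Subgroup.closure {π (genA w), π (genB hw)} = ⊤ := by
    rw [← Set.image_pair, ← MonoidHom.map_closure, closure_genA_genB_eq_top hF hw,
      Subgroup.map_top_of_surjective π (QuotientGroup.mk'_surjective _)]
  have h02 : (0 : Fin 3) ≠ 2 := by decide
  refine ⟨π (genA w), π (genB hw), (π (genA w * genB hw))⁻¹, ?_, ?_, ?_, ?_, ?_⟩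
  · exact orderOf_quotient_mk_eq_prime (genA_pow_five hw)
      (notMem_center_of_apply_ne_zero h02 (by simp [coe_genA]))
  · exact orderOf_quotient_mk_eq_prime (genB_pow_five hw)
      (notMem_center_of_apply_ne_zero h02 (by simp [coe_genB]))
  · rw [orderOf_inv]
    exact orderOf_quotient_mk_eq_prime (genA_mul_genB_pow_seven hw)
      (notMem_center_of_apply_ne_zero zero_ne_one (by simp [coe_genA_mul_genB]))
  · rw [map_mul, mul_inv_cancel]
  · exact top_unique (hgen ▸ Subgroup.closure_mono (by grind))

theorem stmt13 : ∃ a b c : ProjectiveSpecialLinearGroup (Fin 3) (GaloisField 2 2),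
    orderOf a = 5 ∧ orderOf b = 5 ∧ orderOf c = 7 ∧ a * b * c = 1 ∧
      Subgroup.closure
        ({a, b, c} : Set (ProjectiveSpecialLinearGroup (Fin 3) (GaloisField 2 2))) = ⊤ := by
  exact stmt13_general (GaloisField.card 2 2 two_ne_zero)
end
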